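/- Let n ≥ 1 and suppose (A,b) satisfies Setting B with constant δ ∈ (n/(n+π²),1]. Define γ := tr A/(|A|² + |b|²), Ã := γA, b̃ := γb, κ := (δ − n/(n+π²))·(n+π²)/π², and for continuously differentiable ℤⁿ-periodic vector fields v,w : ℝⁿ → ℝⁿ set B₂(v,w) := ∫_Y (∇·v)(Ã:Dw + b̃·w) + (1/2)∫_Y (Dv − (Dv)ᵀ):(Dw − (Dw)ᵀ). Then for every continuously differentiable ℤⁿ-periodic w : ℝⁿ → ℝⁿ with ∫_Y w = 0 there holds B₂(w,w) ≥ (1 − √(1−κ)) ∫_Y |Dw|², where Dw is the Jacobian matrix, ∇·w = tr(Dw), and |Dw| the Frobenius norm. -/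

import Mathlib

open MeasureTheory

noncomputable section

/-- The unit cell `Y = (0,1)^n`. -/
def unitCell (n : ℕ) : Set (Fin n → ℝ) := Set.univ.pi fun _ => Set.Ioo (0 : ℝ) 1

/-- Frobenius norm squared of a matrix. -/
def frobSq {n : ℕ} (M : Matrix (Fin n) (Fin n) ℝ) : ℝ := ∑ i, ∑ j, (M i j) ^ 2

/-- Frobenius inner product of two matrices. -/
def frobInner {n : ℕ} (M N : Matrix (Fin n) (Fin n) ℝ) : ℝ := ∑ i, ∑ j, M i j * N i j

/-- Euclidean norm squared of a vector. -/
def euclSq {n : ℕ} (v : Fin n → ℝ) : ℝ := ∑ i, (v i) ^ 2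

/-- Euclidean dot product. -/
def dotc {n : ℕ} (v w : Fin n → ℝ) : ℝ := ∑ i, v i * w i

/-- `ℤⁿ`-periodicity of a function on `ℝⁿ`. -/
def IsPeriodic {n : ℕ} {α : Type*} (f : (Fin n → ℝ) → α) : Prop :=
  ∀ (x : Fin n → ℝ) (k : Fin n → ℤ), f (x + fun i => (k i : ℝ)) = f x

/-- Partial derivative in direction `i`. -/
def pd {n : ℕ} (f : (Fin n → ℝ) → ℝ) (i : Fin n) (x : Fin n → ℝ) : ℝ :=
  fderiv ℝ f x (Pi.single i 1)

/-- Gradient. -/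
def grad {n : ℕ} (f : (Fin n → ℝ) → ℝ) (x : Fin n → ℝ) : Fin n → ℝ := fun i => pd f i x

/-- Hessian matrix. -/
def hess {n : ℕ} (f : (Fin n → ℝ) → ℝ) (x : Fin n → ℝ) : Matrix (Fin n) (Fin n) ℝ :=
  Matrix.of fun i j => pd (pd f j) i x

/-- Laplacian. -/
def lap {n : ℕ} (f : (Fin n → ℝ) → ℝ) (x : Fin n → ℝ) : ℝ := ∑ i, pd (pd f i) i x

/-- Jacobian matrix of a vector field: `(jac w x) i j = ∂_j w_i (x)`. -/
def jac {n : ℕ} (w : (Fin n → ℝ) → Fin n → ℝ) (x : Fin n → ℝ) : Matrix (Fin n) (Fin n) ℝ :=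
  Matrix.of fun i j => pd (fun y => w y i) j x

/-- Divergence of a vector field. -/
def divg {n : ℕ} (w : (Fin n → ℝ) → Fin n → ℝ) (x : Fin n → ℝ) : ℝ :=
  ∑ i, pd (fun y => w y i) i x

/-- Setting B: symmetric-valued, measurable, `ℤⁿ`-periodic, essentially bounded coefficients,
uniform ellipticity, and the Cordes-type condition with constant `δ ∈ (n/(n+π²), 1]`. -/
structure SettingB {n : ℕ} (A : (Fin n → ℝ) → Matrix (Fin n) (Fin n) ℝ)
    (b : (Fin n → ℝ) → Fin n → ℝ) (lam Lam δ : ℝ) : Prop where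
  symm : ∀ x, (A x).IsSymm
  measA : ∀ i j, Measurable fun x => A x i j
  measb : ∀ i, Measurable fun x => b x i
  perA : IsPeriodic A
  perb : IsPeriodic b
  bddA : ∃ C : ℝ, ∀ᵐ x ∂(volume : Measure (Fin n → ℝ)), frobSq (A x) ≤ C
  bddb : ∃ C : ℝ, ∀ᵐ x ∂(volume : Measure (Fin n → ℝ)), euclSq (b x) ≤ C
  lam_pos : 0 < lam
  lam_le_Lam : lam ≤ Lam
  ellip : ∀ᵐ x ∂(volume : Measure (Fin n → ℝ)), ∀ ξ : Fin n → ℝ,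
    lam * euclSq ξ ≤ dotc ξ (Matrix.mulVec (A x) ξ) ∧
      dotc ξ (Matrix.mulVec (A x) ξ) ≤ Lam * euclSq ξ
  delta_mem : δ ∈ Set.Ioc ((n : ℝ) / ((n : ℝ) + Real.pi ^ 2)) 1
  cordes : ∀ᵐ x ∂(volume : Measure (Fin n → ℝ)),
    (frobSq (A x) + euclSq (b x)) / (Matrix.trace (A x)) ^ 2 ≤ 1 / ((n : ℝ) - 1 + δ)

/-- The renormalization function `γ = tr A / (|A|² + |b|²)`. -/
def gam {n : ℕ} (A : (Fin n → ℝ) → Matrix (Fin n) (Fin n) ℝ)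
    (b : (Fin n → ℝ) → Fin n → ℝ) (x : Fin n → ℝ) : ℝ :=
  Matrix.trace (A x) / (frobSq (A x) + euclSq (b x))

/-- The constant `κ = (δ − n/(n+π²))·(n+π²)/π²`. -/
def kappa (n : ℕ) (δ : ℝ) : ℝ :=
  (δ - (n : ℝ) / ((n : ℝ) + Real.pi ^ 2)) * (((n : ℝ) + Real.pi ^ 2) / Real.pi ^ 2)

/-- The invariant measure: measurable, `ℤⁿ`-periodic, square-integrable over `Y`,
with unit mass over `Y`, solving the stationary FPK equation in the very weak sense. -/
def IsInvariantMeasure {n : ℕ} (A : (Fin n → ℝ) → Matrix (Fin n) (Fin n) ℝ)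
    (b : (Fin n → ℝ) → Fin n → ℝ) (r : (Fin n → ℝ) → ℝ) : Prop :=
  Measurable r ∧ IsPeriodic r ∧
    IntegrableOn (fun x => (r x) ^ 2) (unitCell n) ∧
    (∫ x in unitCell n, r x) = 1 ∧
    ∀ φ : (Fin n → ℝ) → ℝ, ContDiff ℝ 2 φ → IsPeriodic φ →
      (∫ x in unitCell n,
        r x * (frobInner (A x) (hess φ x) + dotc (b x) (grad φ x))) = 0

/-- The bilinear form `B₂`. -/
def B2 {n : ℕ} (A : (Fin n → ℝ) → Matrix (Fin n) (Fin n) ℝ)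
    (b : (Fin n → ℝ) → Fin n → ℝ) (v w : (Fin n → ℝ) → Fin n → ℝ) : ℝ :=
  (∫ x in unitCell n,
    divg v x * (frobInner (gam A b x • A x) (jac w x) + dotc (gam A b x • b x) (w x)))
  + (1 / 2) * ∫ x in unitCell n,
      frobInner (jac v x - (jac v x).transpose) (jac w x - (jac w x).transpose)

/-!
The multiplier `γ` brings `(γA, γb)` as close as possible to the coefficients `(I, 0)` of the
Laplacian, and the Cordes condition says exactly that the remaining distance squared is at most
`1 - δ`. For `C¹` periodic fields `∫_Y (∇·w)² + ½ ∫_Y |Dw - (Dw)ᵀ|² = ∫_Y |Dw|²`, so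
`B₂(w, w) = ∫_Y |Dw|² + ∫_Y (∇·w) R`, where `R` is the pairing of `(Dw, w)` with
`(γA - I, γb)`, and `R² ≤ (1 - δ) (|Dw|² + |w|²)`. Cauchy–Schwarz, together with the periodic
Poincaré inequality `4π² ∫_Y |w|² ≤ ∫_Y |Dw|²`, bounds the second integral. Both facts about
periodic fields follow from Parseval's identity.
-/

open scoped Real ComplexConjugate

section UnitCell

variable {n : ℕ} {E : Type*} [NormedAddCommGroup E]

theorem unitCell_ae_eq_Icc (n : ℕ) : unitCell n =ᵐ[volume] Set.Icc (0 : Fin n → ℝ) 1 :=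
  Measure.univ_pi_Ioo_ae_eq_Icc

theorem unitCell_ae_eq_Ioc (n : ℕ) :
    unitCell n =ᵐ[volume]
      {x : Fin n → ℝ | ∀ i, x i ∈ Set.Ioc ((0 : Fin n → ℝ) i) ((0 : Fin n → ℝ) i + 1)} := by
  have hIoc : {x : Fin n → ℝ | ∀ i, x i ∈ Set.Ioc ((0 : Fin n → ℝ) i) ((0 : Fin n → ℝ) i + 1)}
      = Set.univ.pi fun i => Set.Ioc ((0 : Fin n → ℝ) i) ((1 : Fin n → ℝ) i) := by
    ext x
    simp [Set.mem_pi]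
  rw [hIoc]
  exact (unitCell_ae_eq_Icc n).trans Measure.univ_pi_Ioc_ae_eq_Icc.symm

theorem integrableOn_unitCell_of_continuous {f : (Fin n → ℝ) → E} (hf : Continuous f) :
    IntegrableOn f (unitCell n) :=
  hf.integrableOn_Icc.congr_set_ae (unitCell_ae_eq_Icc n)

theorem memLp_unitCell_of_continuous {f : (Fin n → ℝ) → E} (hf : Continuous f) (p : ENNReal) :
    MemLp f p (volume.restrict (unitCell n)) := by
  rw [Measure.restrict_congr_set (unitCell_ae_eq_Icc n)]
  obtain ⟨C, hC⟩ := (isCompact_Icc (a := (0 : Fin n → ℝ)) (b := 1)).exists_bound_of_continuousOn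
    hf.continuousOn
  have : IsFiniteMeasure (volume.restrict (Set.Icc (0 : Fin n → ℝ) 1)) :=
    ⟨by simpa using isCompact_Icc.measure_lt_top⟩
  exact MemLp.of_bound hf.aestronglyMeasurable C
    ((ae_restrict_iff' measurableSet_Icc).2 (Filter.Eventually.of_forall hC))

theorem IsPeriodic.apply {ι α : Type*} {w : (Fin n → ℝ) → ι → α} (hw : IsPeriodic w) (i : ι) :
    IsPeriodic fun x => w x i :=
  fun x k => congrFun (hw x k) i

theorem IsPeriodic.apply_insertNth_one {α : Type*} {f : (Fin (n + 1) → ℝ) → α}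
    (hf : IsPeriodic f) (i : Fin (n + 1)) (y : Fin n → ℝ) :
    f (i.insertNth (α := fun _ => ℝ) 1 y) = f (i.insertNth (α := fun _ => ℝ) 0 y) := by
  rw [← hf (i.insertNth (α := fun _ => ℝ) 0 y) (Pi.single i 1)]
  congr 1
  ext l
  refine Fin.succAboveCases i ?_ (fun l => ?_) l <;> simp

theorem integral_unitCell_fderiv_eq_zero [NormedSpace ℝ E] {h : (Fin n → ℝ) → E}
    (hh : ContDiff ℝ 1 h) (hper : IsPeriodic h) (v : Fin n → ℝ) :
    ∫ x in unitCell n, fderiv ℝ h x v = 0 := by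
  obtain _ | m := n
  · simp only [Subsingleton.elim v 0, map_zero, integral_zero]
  have hdiv := integral_divergence_of_hasFDerivAt_off_countable' (0 : Fin (m + 1) → ℝ) 1
    zero_le_one (fun i x => v i • h x) (fun i x => v i • fderiv ℝ h x) ∅ Set.countable_empty
    (fun i => (hh.continuous.const_smul (v i)).continuousOn)
    (fun x _ i => (hh.differentiable one_ne_zero x).hasFDerivAt.const_smul (v i))
    (Continuous.integrableOn_Icc <| continuous_finsetSum _ fun i _ =>
      ((hh.continuous_fderiv one_ne_zero).const_smul (v i)).clm_apply continuous_const)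
  have hsum : ∀ x, ∑ i, (v i • fderiv ℝ h x) (Pi.single i 1) = fderiv ℝ h x v := fun x => by
    simp only [smul_apply, ← map_smul, ← map_sum]
    congr 1
    exact (pi_eq_sum_univ' v).symm
  rw [setIntegral_congr_set (unitCell_ae_eq_Icc _)]
  simpa only [hsum, Pi.one_apply, Pi.zero_apply, hper.apply_insertNth_one, sub_self,
    Finset.sum_const_zero] using hdiv

end UnitCell

section CauchySchwarz

theorem sq_integral_mul_le {α : Type*} [MeasurableSpace α] {μ : Measure α} {f g : α → ℝ}
    (hf : MemLp f 2 μ) (hg : MemLp g 2 μ) :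
    (∫ x, f x * g x ∂μ) ^ 2 ≤ (∫ x, f x ^ 2 ∂μ) * ∫ x, g x ^ 2 ∂μ := by
  have inner_toLp : ∀ {u v : α → ℝ} (hu : MemLp u 2 μ) (hv : MemLp v 2 μ),
      inner ℝ (hu.toLp u) (hv.toLp v) = ∫ x, u x * v x ∂μ := fun {u v} hu hv => by
    rw [L2.inner_def]
    refine integral_congr_ae ?_
    filter_upwards [hu.coeFn_toLp, hv.coeFn_toLp] with x hux hvx
    simp [hux, hvx, mul_comm]
  simpa only [inner_toLp, ← pow_two] using
    real_inner_mul_inner_self_le (hf.toLp f) (hg.toLp g)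

end CauchySchwarz

section FourierMode

/-- The Fourier mode `x ↦ e^{2πi k·x}`, as the lift to `ℝⁿ` of Mathlib's monomials on the torus. -/
def fourierMode {n : ℕ} (k : Fin n → ℤ) (x : Fin n → ℝ) : ℂ :=
  UnitAddTorus.mFourier k fun i => (x i : UnitAddCircle)

variable {n : ℕ} (k : Fin n → ℤ)

theorem isPeriodic_fourierMode : IsPeriodic (fourierMode k) := fun x l => by
  simp [fourierMode]

theorem fourierMode_eq_exp :
    fourierMode k = fun x => Complex.exp (2 * π * Complex.I * ∑ i, (k i : ℂ) * (x i : ℂ)) := by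
  ext x
  simp only [fourierMode, UnitAddTorus.mFourier, ContinuousMap.coe_mk, fourier_coe_apply,
    Complex.ofReal_one, div_one, ← Complex.exp_sum, Finset.mul_sum, mul_assoc]

theorem contDiff_fourierMode {m : WithTop ℕ∞} : ContDiff ℝ m (fourierMode k) := by
  rw [fourierMode_eq_exp]
  have hx : ∀ i, ContDiff ℝ m fun x : Fin n → ℝ => (x i : ℂ) := fun i =>
    Complex.ofRealCLM.contDiff.comp (contDiff_apply ℝ ℝ i)
  fun_prop

theorem fderiv_fourierMode (x v : Fin n → ℝ) :
    fderiv ℝ (fourierMode k) x v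
      = 2 * π * Complex.I * (∑ i, (k i : ℂ) * (v i : ℂ)) * fourierMode k x := by
  have hx : ∀ i, HasFDerivAt (fun x : Fin n → ℝ => (x i : ℂ))
      (Complex.ofRealCLM.comp (ContinuousLinearMap.proj (R := ℝ) (φ := fun _ : Fin n => ℝ) i)) x :=
    fun i => Complex.ofRealCLM.hasFDerivAt.comp x (hasFDerivAt_apply i x)
  have h := ((HasFDerivAt.fun_sum fun i (_ : i ∈ Finset.univ) =>
    (hx i).const_mul (k i : ℂ)).const_mul (2 * π * Complex.I)).cexp
  rw [fourierMode_eq_exp, h.fderiv]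
  simp [mul_comm]

end FourierMode

section Parseval

attribute [local instance] instMeasureSpaceUnitAddCircle

variable {n : ℕ}

/-- The representative in `(0,1]ⁿ` of a point of the torus, which transports functions on the cell
to functions on the torus. -/
def torusToCell (t : UnitAddTorus (Fin n)) : Fin n → ℝ :=
  UnitAddTorus.measurableEquivPiIoc (0 : Fin n → ℝ) t

theorem coe_torusToCell (t : UnitAddTorus (Fin n)) :
    (fun i => (torusToCell t i : UnitAddCircle)) = t :=
  (UnitAddTorus.measurableEquivPiIoc (0 : Fin n → ℝ)).symm_apply_apply t

theorem measurableSet_pi_Ioc :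
    MeasurableSet
      {x : Fin n → ℝ | ∀ i, x i ∈ Set.Ioc ((0 : Fin n → ℝ) i) ((0 : Fin n → ℝ) i + 1)} :=
  MeasurableSet.univ_pi' fun _ => measurableSet_Ioc

theorem measurableEmbedding_torusToCell : MeasurableEmbedding (torusToCell (n := n)) :=
  (MeasurableEmbedding.subtype_coe measurableSet_pi_Ioc).comp
    (UnitAddTorus.measurableEquivPiIoc (0 : Fin n → ℝ)).measurableEmbedding

theorem measurePreserving_torusToCell :
    MeasurePreserving (torusToCell (n := n)) volume (volume.restrict (unitCell n)) := by
  rw [Measure.restrict_congr_set (unitCell_ae_eq_Ioc n)]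
  exact (measurePreserving_subtype_coe measurableSet_pi_Ioc).comp
    (UnitAddTorus.measurePreserving_equivPiIoc (0 : Fin n → ℝ))

/-- The Fourier coefficient `∫_Y e^{-2πi k·x} f(x) dx` of a function on the unit cell. -/
def cellFourierCoeff (f : (Fin n → ℝ) → ℂ) (k : Fin n → ℤ) : ℂ :=
  ∫ x in unitCell n, fourierMode (-k) x * f x

variable {f g : (Fin n → ℝ) → ℂ}

theorem mFourierCoeff_comp_torusToCell (f : (Fin n → ℝ) → ℂ) (k : Fin n → ℤ) :
    UnitAddTorus.mFourierCoeff (f ∘ torusToCell) k = cellFourierCoeff f k := by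
  rw [cellFourierCoeff,
    ← measurePreserving_torusToCell.integral_comp measurableEmbedding_torusToCell]
  simp only [fourierMode, coe_torusToCell, UnitAddTorus.mFourierCoeff, Function.comp_apply,
    smul_eq_mul]

theorem hasSum_conj_cellFourierCoeff_mul (hf : MemLp f 2 (volume.restrict (unitCell n)))
    (hg : MemLp g 2 (volume.restrict (unitCell n))) :
    HasSum (fun k => conj (cellFourierCoeff f k) * cellFourierCoeff g k)
      (∫ x in unitCell n, conj (f x) * g x) := by
  have hf' := hf.comp_measurePreserving measurePreserving_torusToCell
  have hg' := hg.comp_measurePreserving measurePreserving_torusToCell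
  have coeff_toLp : ∀ {u : (Fin n → ℝ) → ℂ} (hu : MemLp (u ∘ torusToCell) 2 volume) k,
      UnitAddTorus.mFourierCoeff (hu.toLp _) k = cellFourierCoeff u k := fun {u} hu k => by
    rw [← mFourierCoeff_comp_torusToCell]
    exact integral_congr_ae (hu.coeFn_toLp.mono fun t ht => by simp only [ht])
  have integral_toLp : ∫ t, conj (hf'.toLp _ t) * hg'.toLp _ t
      = ∫ x in unitCell n, conj (f x) * g x := by
    rw [← measurePreserving_torusToCell.integral_comp measurableEmbedding_torusToCell]
    refine integral_congr_ae ?_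
    filter_upwards [hf'.coeFn_toLp, hg'.coeFn_toLp] with t hft hgt
    rw [hft, hgt, Function.comp_apply, Function.comp_apply]
  simpa only [coeff_toLp, integral_toLp] using
    UnitAddTorus.hasSum_prod_mFourierCoeff (hf'.toLp _) (hg'.toLp _)

theorem hasSum_norm_sq_cellFourierCoeff (hf : MemLp f 2 (volume.restrict (unitCell n))) :
    HasSum (fun k => ‖cellFourierCoeff f k‖ ^ 2) (∫ x in unitCell n, ‖f x‖ ^ 2) := by
  have h := hasSum_conj_cellFourierCoeff_mul hf hf
  simp only [Complex.conj_mul', ← Complex.ofReal_pow, integral_complex_ofReal] at h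
  exact Complex.hasSum_ofReal.1 h

end Parseval

section FourierDerivative

variable {n : ℕ} {f g : (Fin n → ℝ) → ℝ}

theorem cellFourierCoeff_fderiv {f : (Fin n → ℝ) → ℂ} (hf : ContDiff ℝ 1 f) (hper : IsPeriodic f)
    (v : Fin n → ℝ) (k : Fin n → ℤ) :
    cellFourierCoeff (fun x => fderiv ℝ f x v) k
      = 2 * π * Complex.I * (∑ i, (k i : ℂ) * (v i : ℂ)) * cellFourierCoeff f k := by
  set c : ℂ := 2 * π * Complex.I * ∑ i, (k i : ℂ) * (v i : ℂ) with hc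
  have hmode : ContDiff ℝ 1 (fourierMode (-k)) := contDiff_fourierMode (-k)
  have hperiodic : IsPeriodic fun x => fourierMode (-k) x * f x := fun x l =>
    congrArg₂ (· * ·) (isPeriodic_fourierMode (-k) x l) (hper x l)
  have hprod : ∀ x, fderiv ℝ (fun x => fourierMode (-k) x * f x) x v
      = fourierMode (-k) x * fderiv ℝ f x v - c * (fourierMode (-k) x * f x) := fun x => by
    rw [fderiv_fun_mul (hmode.differentiable one_ne_zero x) (hf.differentiable one_ne_zero x)]
    simp only [add_apply, smul_apply, smul_eq_mul, fderiv_fourierMode, Pi.neg_apply, Int.cast_neg,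
      neg_mul, Finset.sum_neg_distrib, hc]
    ring
  have hzero := integral_unitCell_fderiv_eq_zero (hmode.mul hf) hperiodic v
  simp only [hprod] at hzero
  have hint_deriv : IntegrableOn (fun x => fourierMode (-k) x * fderiv ℝ f x v) (unitCell n) :=
    integrableOn_unitCell_of_continuous (hmode.continuous.mul
      ((hf.continuous_fderiv one_ne_zero).clm_apply continuous_const))
  have hint : IntegrableOn (fun x => fourierMode (-k) x * f x) (unitCell n) :=
    integrableOn_unitCell_of_continuous (hmode.continuous.mul hf.continuous)
  rwa [integral_sub hint_deriv (hint.const_mul c), integral_const_mul, sub_eq_zero] at hzero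

theorem continuous_pd (hf : ContDiff ℝ 1 f) (j : Fin n) : Continuous (pd f j) :=
  (hf.continuous_fderiv one_ne_zero).clm_apply continuous_const

theorem memLp_ofReal_pd (hf : ContDiff ℝ 1 f) (j : Fin n) :
    MemLp (fun x => (pd f j x : ℂ)) 2 (volume.restrict (unitCell n)) :=
  memLp_unitCell_of_continuous (Complex.continuous_ofReal.comp (continuous_pd hf j)) 2

theorem cellFourierCoeff_pd (hf : ContDiff ℝ 1 f) (hper : IsPeriodic f) (j : Fin n)
    (k : Fin n → ℤ) :
    cellFourierCoeff (fun x => (pd f j x : ℂ)) k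
      = 2 * π * Complex.I * k j * cellFourierCoeff (fun x => (f x : ℂ)) k := by
  have hpd : ∀ x, (pd f j x : ℂ) = fderiv ℝ (fun x => (f x : ℂ)) x (Pi.single j 1) := fun x => by
    have := Complex.ofRealCLM.hasFDerivAt.comp x (hf.differentiable one_ne_zero x).hasFDerivAt
    rw [HasFDerivAt.fderiv (f := fun x => (f x : ℂ)) this]
    rfl
  have hsum : ∑ i, (k i : ℂ) * ((Pi.single j (1 : ℝ) : Fin n → ℝ) i : ℂ) = k j := by
    rw [Finset.sum_eq_single j] <;> simp +contextual
  simp only [hpd]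
  rw [cellFourierCoeff_fderiv (f := fun x => (f x : ℂ)) (Complex.ofRealCLM.contDiff.comp hf)
    (fun x l => congrArg _ (hper x l)), hsum]

/-- Integrating by parts twice would need second derivatives; on the Fourier side both integrals
are `∑ 4π² kᵢ kⱼ conj(f̂ k) (ĝ k)`. -/
theorem integral_pd_mul_pd_swap (hf : ContDiff ℝ 1 f) (hfper : IsPeriodic f) (hg : ContDiff ℝ 1 g)
    (hgper : IsPeriodic g) (i j : Fin n) :
    ∫ x in unitCell n, pd f i x * pd g j x = ∫ x in unitCell n, pd f j x * pd g i x := by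
  have hij := hasSum_conj_cellFourierCoeff_mul (memLp_ofReal_pd hf i) (memLp_ofReal_pd hg j)
  have hji := hasSum_conj_cellFourierCoeff_mul (memLp_ofReal_pd hf j) (memLp_ofReal_pd hg i)
  simp only [cellFourierCoeff_pd, hf, hfper, hg, hgper, Complex.conj_ofReal, ← Complex.ofReal_mul,
    integral_complex_ofReal] at hij hji
  refine Complex.ofReal_injective (hij.unique (hji.congr_fun fun k => ?_))
  simp only [map_mul, map_intCast]
  ring

theorem norm_sq_cellFourierCoeff_le_sum_pd (hf : ContDiff ℝ 1 f) (hper : IsPeriodic f)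
    {k : Fin n → ℤ} (hk : k ≠ 0) :
    4 * π ^ 2 * ‖cellFourierCoeff (fun x => (f x : ℂ)) k‖ ^ 2
      ≤ ∑ j, ‖cellFourierCoeff (fun x => (pd f j x : ℂ)) k‖ ^ 2 := by
  obtain ⟨j, hj⟩ := Function.ne_iff.1 hk
  have hone : (1 : ℝ) ≤ (k j : ℝ) ^ 2 := by
    exact_mod_cast Int.add_one_le_iff.2 (sq_pos_of_ne_zero hj)
  calc 4 * π ^ 2 * ‖cellFourierCoeff (fun x => (f x : ℂ)) k‖ ^ 2
      ≤ 4 * π ^ 2 * ‖cellFourierCoeff (fun x => (f x : ℂ)) k‖ ^ 2 * (k j : ℝ) ^ 2 :=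
        le_mul_of_one_le_right (by positivity) hone
    _ = ‖cellFourierCoeff (fun x => (pd f j x : ℂ)) k‖ ^ 2 := by
        rw [cellFourierCoeff_pd hf hper]
        simp only [norm_mul, Complex.norm_ofNat, Complex.norm_real, Real.norm_eq_abs,
          Complex.norm_I, Complex.norm_intCast, mul_pow, sq_abs]
        ring
    _ ≤ _ := Finset.single_le_sum
        (f := fun j => ‖cellFourierCoeff (fun x => (pd f j x : ℂ)) k‖ ^ 2)
        (fun _ _ => by positivity) (Finset.mem_univ j)

theorem poincare_periodic (hf : ContDiff ℝ 1 f) (hper : IsPeriodic f)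
    (hmean : ∫ x in unitCell n, f x = 0) :
    4 * π ^ 2 * ∫ x in unitCell n, f x ^ 2 ≤ ∑ j, ∫ x in unitCell n, pd f j x ^ 2 := by
  have hsum := hasSum_norm_sq_cellFourierCoeff (f := fun x => (f x : ℂ))
    (memLp_unitCell_of_continuous (Complex.continuous_ofReal.comp hf.continuous) 2)
  have hsum_pd := hasSum_sum fun j (_ : j ∈ Finset.univ) =>
    hasSum_norm_sq_cellFourierCoeff (memLp_ofReal_pd hf j)
  simp only [Complex.norm_real, Real.norm_eq_abs, sq_abs] at hsum hsum_pd
  refine hasSum_le (fun k => ?_) (hsum.mul_left _) hsum_pd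
  obtain rfl | hk := eq_or_ne k 0
  · have hzero : cellFourierCoeff (fun x => (f x : ℂ)) 0 = 0 := by
      simp [cellFourierCoeff, fourierMode, UnitAddTorus.mFourier_zero, integral_complex_ofReal,
        hmean]
    rw [hzero, norm_zero, zero_pow two_ne_zero, mul_zero]
    positivity
  · exact norm_sq_cellFourierCoeff_le_sum_pd hf hper hk

end FourierDerivative

section Frobenius

variable {n : ℕ}

theorem frobSq_nonneg (M : Matrix (Fin n) (Fin n) ℝ) : 0 ≤ frobSq M :=
  Finset.sum_nonneg fun _ _ => Finset.sum_nonneg fun _ _ => sq_nonneg _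

theorem euclSq_nonneg (v : Fin n → ℝ) : 0 ≤ euclSq v :=
  Finset.sum_nonneg fun _ _ => sq_nonneg _

theorem euclSq_smul (s : ℝ) (v : Fin n → ℝ) : euclSq (s • v) = s ^ 2 * euclSq v := by
  simp only [euclSq, Pi.smul_apply, smul_eq_mul, mul_pow, Finset.mul_sum]

theorem sq_trace_le (M : Matrix (Fin n) (Fin n) ℝ) : M.trace ^ 2 ≤ n * frobSq M :=
  calc M.trace ^ 2 ≤ n * ∑ i, M i i ^ 2 := by
        simpa [Matrix.trace] using sq_sum_le_card_mul_sum_sq (s := Finset.univ) (f := M.diag)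
    _ ≤ n * frobSq M := mul_le_mul_of_nonneg_left (Finset.sum_le_sum fun i _ =>
        Finset.single_le_sum (f := fun j => M i j ^ 2) (fun _ _ => sq_nonneg _)
          (Finset.mem_univ i)) n.cast_nonneg

theorem frobSq_pos_of_trace_ne_zero {M : Matrix (Fin n) (Fin n) ℝ} (hM : M.trace ≠ 0) :
    0 < frobSq M :=
  pos_of_mul_pos_right ((sq_pos_of_ne_zero hM).trans_le (sq_trace_le M)) n.cast_nonneg

theorem frobInner_one_left (M : Matrix (Fin n) (Fin n) ℝ) : frobInner 1 M = M.trace := by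
  simp [frobInner, Matrix.one_apply, Matrix.trace]

theorem frobInner_sub_left (M N D : Matrix (Fin n) (Fin n) ℝ) :
    frobInner (M - N) D = frobInner M D - frobInner N D := by
  simp only [frobInner, Matrix.sub_apply, sub_mul, Finset.sum_sub_distrib]

theorem frobSq_smul_sub_one (s : ℝ) (M : Matrix (Fin n) (Fin n) ℝ) :
    frobSq (s • M - 1) = s ^ 2 * frobSq M - 2 * s * M.trace + n := by
  have hsq : ∀ i j, (s • M - 1) i j ^ 2
      = s ^ 2 * M i j ^ 2 - 2 * s * ((1 : Matrix (Fin n) (Fin n) ℝ) i j * M i j)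
        + (1 : Matrix (Fin n) (Fin n) ℝ) i j := fun i j => by
    obtain rfl | hij := eq_or_ne i j
    · simp only [Matrix.sub_apply, Matrix.smul_apply, smul_eq_mul, Matrix.one_apply_eq]
      ring
    · simp only [Matrix.sub_apply, Matrix.smul_apply, smul_eq_mul, Matrix.one_apply_ne hij]
      ring
  have hone : ∑ i, ∑ j, (1 : Matrix (Fin n) (Fin n) ℝ) i j = n := by simp [Matrix.one_apply]
  simp only [frobSq, hsq, Finset.sum_add_distrib, Finset.sum_sub_distrib, ← Finset.mul_sum, hone]
  rw [← frobInner_one_left, frobInner]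

theorem frobInner_sub_transpose_self (D : Matrix (Fin n) (Fin n) ℝ) :
    frobInner (D - D.transpose) (D - D.transpose)
      = 2 * (frobSq D - ∑ i, ∑ j, D i j * D j i) := by
  have hsq : ∀ i j, (D - D.transpose) i j * (D - D.transpose) i j
      = D i j ^ 2 + D j i ^ 2 - 2 * (D i j * D j i) := fun i j => by
    simp only [Matrix.sub_apply, Matrix.transpose_apply]
    ring
  have hcomm : ∑ i, ∑ j, D j i ^ 2 = ∑ i, ∑ j, D i j ^ 2 := Finset.sum_comm
  simp only [frobInner, frobSq, hsq, Finset.sum_add_distrib, Finset.sum_sub_distrib, hcomm,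
    ← Finset.mul_sum]
  ring

theorem sq_frobInner_add_dotc_le (P D : Matrix (Fin n) (Fin n) ℝ) (q w : Fin n → ℝ) :
    (frobInner P D + dotc q w) ^ 2 ≤ (frobSq P + euclSq q) * (frobSq D + euclSq w) := by
  have h := Finset.sum_mul_sq_le_sq_mul_sq Finset.univ
    (Sum.elim (fun p : Fin n × Fin n => P p.1 p.2) q)
    (Sum.elim (fun p : Fin n × Fin n => D p.1 p.2) w)
  simpa only [Fintype.sum_sum_type, Fintype.sum_prod_type, Sum.elim_inl, Sum.elim_inr, frobInner,
    dotc, frobSq, euclSq] using h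

theorem trace_pos_of_elliptic (hn : 1 ≤ n) {M : Matrix (Fin n) (Fin n) ℝ} {lam : ℝ}
    (hlam : 0 < lam) (hM : ∀ ξ : Fin n → ℝ, lam * euclSq ξ ≤ dotc ξ (M.mulVec ξ)) :
    0 < M.trace := by
  have hdiag : ∀ i, 0 < M i i := fun i => by
    have hi := hM (Pi.single i 1)
    simp only [euclSq, dotc, Pi.single_apply, Matrix.mulVec_single_one, Matrix.col_apply, ite_pow,
      one_pow, ne_eq, OfNat.ofNat_ne_zero, not_false_eq_true, zero_pow, ite_mul, one_mul, zero_mul,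
      Finset.sum_ite_eq', Finset.mem_univ, if_true, mul_one] at hi
    exact hlam.trans_le hi
  exact Finset.sum_pos (fun i _ => hdiag i) ⟨⟨0, hn⟩, Finset.mem_univ _⟩

/-- The multiplier `tr M / (|M|² + |v|²)` is the one minimizing `s ↦ |s M - I|² + |s v|²`. -/
theorem frobSq_smul_sub_one_add_euclSq_smul_le {M : Matrix (Fin n) (Fin n) ℝ} {v : Fin n → ℝ}
    {δ : ℝ} (htr : M.trace ≠ 0)
    (hcordes : (frobSq M + euclSq v) / M.trace ^ 2 ≤ 1 / ((n : ℝ) - 1 + δ)) :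
    frobSq ((M.trace / (frobSq M + euclSq v)) • M - 1)
      + euclSq ((M.trace / (frobSq M + euclSq v)) • v) ≤ 1 - δ := by
  set S := frobSq M + euclSq v with hS
  have hSpos : 0 < S := add_pos_of_pos_of_nonneg (frobSq_pos_of_trace_ne_zero htr) (euclSq_nonneg v)
  have htrsq : 0 < M.trace ^ 2 := by positivity
  have hden : 0 < (n : ℝ) - 1 + δ := one_div_pos.1 ((div_pos hSpos htrsq).trans_le hcordes)
  have hquot : (n : ℝ) - 1 + δ ≤ M.trace ^ 2 / S := by
    rw [div_le_div_iff₀ htrsq hden] at hcordes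
    rw [le_div_iff₀ hSpos]
    linarith
  calc frobSq ((M.trace / S) • M - 1) + euclSq ((M.trace / S) • v)
      = (M.trace / S) ^ 2 * S - 2 * (M.trace / S) * M.trace + n := by
        rw [frobSq_smul_sub_one, euclSq_smul, hS]
        ring
    _ = n - M.trace ^ 2 / S := by
        field_simp
        ring
    _ ≤ 1 - δ := by linarith

end Frobenius

section VectorField

variable {n : ℕ} {w : (Fin n → ℝ) → Fin n → ℝ}

theorem continuous_jac_apply (hw : ContDiff ℝ 1 w) (i j : Fin n) :
    Continuous fun x => jac w x i j :=
  continuous_pd (contDiff_pi.1 hw i) j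

theorem continuous_frobSq_jac (hw : ContDiff ℝ 1 w) : Continuous fun x => frobSq (jac w x) :=
  continuous_finsetSum _ fun i _ => continuous_finsetSum _ fun j _ =>
    (continuous_jac_apply hw i j).pow 2

theorem continuous_euclSq_comp (hw : Continuous w) : Continuous fun x => euclSq (w x) :=
  continuous_finsetSum _ fun i _ => ((continuous_apply i).comp hw).pow 2

theorem continuous_divg (hw : ContDiff ℝ 1 w) : Continuous (divg w) :=
  continuous_finsetSum _ fun i _ => continuous_jac_apply hw i i

theorem trace_jac (w : (Fin n → ℝ) → Fin n → ℝ) (x : Fin n → ℝ) : (jac w x).trace = divg w x :=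
  rfl

theorem integral_unitCell_sum_sum {F : Fin n → Fin n → (Fin n → ℝ) → ℝ}
    (hF : ∀ i j, Continuous (F i j)) :
    ∫ x in unitCell n, ∑ i, ∑ j, F i j x = ∑ i, ∑ j, ∫ x in unitCell n, F i j x := by
  have hint : ∀ i j, IntegrableOn (F i j) (unitCell n) := fun i j =>
    integrableOn_unitCell_of_continuous (hF i j)
  rw [integral_finsetSum _ fun i _ => integrable_finsetSum _ fun j _ => hint i j]
  exact Finset.sum_congr rfl fun i _ => integral_finsetSum _ fun j _ => hint i j

theorem integral_sum_jac_mul_jac_transpose (hw : ContDiff ℝ 1 w) (hper : IsPeriodic w) :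
    ∫ x in unitCell n, ∑ i, ∑ j, jac w x i j * jac w x j i
      = ∫ x in unitCell n, divg w x ^ 2 := by
  have hc := continuous_jac_apply hw
  have hdivg : ∀ x, divg w x ^ 2 = ∑ i, ∑ j, jac w x i i * jac w x j j := fun x => by
    rw [← trace_jac, pow_two]
    exact Finset.sum_mul_sum _ _ _ _
  simp only [hdivg]
  rw [integral_unitCell_sum_sum (F := fun i j x => jac w x i j * jac w x j i)
      fun i j => (hc i j).mul (hc j i),
    integral_unitCell_sum_sum (F := fun i j x => jac w x i i * jac w x j j)
      fun i j => (hc i i).mul (hc j j)]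
  exact Finset.sum_congr rfl fun i _ => Finset.sum_congr rfl fun j _ =>
    integral_pd_mul_pd_swap (contDiff_pi.1 hw i) (hper.apply i) (contDiff_pi.1 hw j)
      (hper.apply j) j i

theorem integral_divg_sq_add_half_integral_rot (hw : ContDiff ℝ 1 w) (hper : IsPeriodic w) :
    (∫ x in unitCell n, divg w x ^ 2) + (1 / 2) * ∫ x in unitCell n,
      frobInner (jac w x - (jac w x).transpose) (jac w x - (jac w x).transpose)
      = ∫ x in unitCell n, frobSq (jac w x) := by
  have hint : IntegrableOn (fun x => ∑ i, ∑ j, jac w x i j * jac w x j i) (unitCell n) :=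
    integrableOn_unitCell_of_continuous (continuous_finsetSum _ fun i _ =>
      continuous_finsetSum _ fun j _ =>
        (continuous_jac_apply hw i j).mul (continuous_jac_apply hw j i))
  simp only [frobInner_sub_transpose_self]
  rw [integral_const_mul,
    integral_sub (integrableOn_unitCell_of_continuous (continuous_frobSq_jac hw)) hint,
    integral_sum_jac_mul_jac_transpose hw hper]
  ring

theorem integral_divg_sq_le (hw : ContDiff ℝ 1 w) (hper : IsPeriodic w) :
    ∫ x in unitCell n, divg w x ^ 2 ≤ ∫ x in unitCell n, frobSq (jac w x) := by
  have hrot : 0 ≤ ∫ x in unitCell n,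
      frobInner (jac w x - (jac w x).transpose) (jac w x - (jac w x).transpose) :=
    integral_nonneg fun x => Finset.sum_nonneg fun _ _ => Finset.sum_nonneg fun _ _ =>
      mul_self_nonneg _
  linarith [integral_divg_sq_add_half_integral_rot hw hper]

theorem integral_euclSq_le_integral_frobSq_jac (hw : ContDiff ℝ 1 w) (hper : IsPeriodic w)
    (hmean : ∫ x in unitCell n, w x = 0) :
    4 * π ^ 2 * ∫ x in unitCell n, euclSq (w x) ≤ ∫ x in unitCell n, frobSq (jac w x) := by
  have hc := fun i => contDiff_pi.1 hw i
  have hmean_apply : ∀ i, ∫ x in unitCell n, w x i = 0 := fun i => by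
    rw [← eval_integral fun j => integrableOn_unitCell_of_continuous (hc j).continuous, hmean,
      Pi.zero_apply]
  simp only [euclSq, frobSq]
  rw [integral_unitCell_sum_sum (F := fun i j x => jac w x i j ^ 2)
      fun i j => (continuous_jac_apply hw i j).pow 2,
    integral_finsetSum (f := fun i x => w x i ^ 2) _ fun i _ =>
      integrableOn_unitCell_of_continuous ((hc i).continuous.pow 2),
    Finset.mul_sum]
  exact Finset.sum_le_sum fun i _ => poincare_periodic (hc i) (hper.apply i) (hmean_apply i)

theorem integral_frobSq_jac_add_euclSq_le (hw : ContDiff ℝ 1 w) (hper : IsPeriodic w)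
    (hmean : ∫ x in unitCell n, w x = 0) :
    ∫ x in unitCell n, (frobSq (jac w x) + euclSq (w x))
      ≤ (1 + 1 / (4 * π ^ 2)) * ∫ x in unitCell n, frobSq (jac w x) := by
  have heucl : ∫ x in unitCell n, euclSq (w x)
      ≤ (∫ x in unitCell n, frobSq (jac w x)) / (4 * π ^ 2) :=
    (le_div_iff₀' (by positivity)).2 (integral_euclSq_le_integral_frobSq_jac hw hper hmean)
  rw [integral_add (integrableOn_unitCell_of_continuous (continuous_frobSq_jac hw))
    (integrableOn_unitCell_of_continuous (continuous_euclSq_comp hw.continuous)), add_mul, one_mul,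
    one_div_mul_eq_div]
  gcongr

end VectorField

section Coercivity

/-- The pairing of `(Dw, w)` with the defect `(γA - I, γb)` of the renormalized coefficients from
those of the Laplacian. -/
def cordesDefect {n : ℕ} (A : (Fin n → ℝ) → Matrix (Fin n) (Fin n) ℝ)
    (b w : (Fin n → ℝ) → Fin n → ℝ) (x : Fin n → ℝ) : ℝ :=
  frobInner (gam A b x • A x - 1) (jac w x) + dotc (gam A b x • b x) (w x)

variable {n : ℕ} {A : (Fin n → ℝ) → Matrix (Fin n) (Fin n) ℝ} {b w : (Fin n → ℝ) → Fin n → ℝ}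
  {δ : ℝ}

theorem sq_cordesDefect_le {x : Fin n → ℝ} (htr : (A x).trace ≠ 0)
    (hcordes : (frobSq (A x) + euclSq (b x)) / (A x).trace ^ 2 ≤ 1 / ((n : ℝ) - 1 + δ)) :
    cordesDefect A b w x ^ 2 ≤ (1 - δ) * (frobSq (jac w x) + euclSq (w x)) :=
  (sq_frobInner_add_dotc_le _ _ _ _).trans <| mul_le_mul_of_nonneg_right
    (frobSq_smul_sub_one_add_euclSq_smul_le htr hcordes)
    (add_nonneg (frobSq_nonneg _) (euclSq_nonneg _))

theorem aemeasurable_cordesDefect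
    (hA : ∀ i j, AEMeasurable (fun x => A x i j) (volume.restrict (unitCell n)))
    (hb : ∀ i, AEMeasurable (fun x => b x i) (volume.restrict (unitCell n)))
    (hw : ContDiff ℝ 1 w) :
    AEMeasurable (cordesDefect A b w) (volume.restrict (unitCell n)) := by
  have hjac : ∀ i j, AEMeasurable (fun x => jac w x i j) (volume.restrict (unitCell n)) :=
    fun i j => (continuous_jac_apply hw i j).aemeasurable
  have hwi : ∀ i, AEMeasurable (fun x => w x i) (volume.restrict (unitCell n)) :=
    fun i => (contDiff_pi.1 hw i).continuous.aemeasurable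
  have hgam : AEMeasurable (gam A b) (volume.restrict (unitCell n)) := by
    unfold gam frobSq euclSq Matrix.trace Matrix.diag
    fun_prop
  unfold cordesDefect
  simp only [frobInner, dotc, Matrix.sub_apply, Matrix.smul_apply, Pi.smul_apply, smul_eq_mul]
  fun_prop

theorem integrableOn_frobSq_jac_add_euclSq (hw : ContDiff ℝ 1 w) :
    IntegrableOn (fun x => frobSq (jac w x) + euclSq (w x)) (unitCell n) :=
  integrableOn_unitCell_of_continuous
    ((continuous_frobSq_jac hw).add (continuous_euclSq_comp hw.continuous))

theorem memLp_cordesDefect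
    (hA : ∀ i j, AEMeasurable (fun x => A x i j) (volume.restrict (unitCell n)))
    (hb : ∀ i, AEMeasurable (fun x => b x i) (volume.restrict (unitCell n)))
    (htr : ∀ᵐ x ∂volume.restrict (unitCell n), (A x).trace ≠ 0)
    (hcordes : ∀ᵐ x ∂volume.restrict (unitCell n),
      (frobSq (A x) + euclSq (b x)) / (A x).trace ^ 2 ≤ 1 / ((n : ℝ) - 1 + δ))
    (hw : ContDiff ℝ 1 w) :
    MemLp (cordesDefect A b w) 2 (volume.restrict (unitCell n)) := by
  have hmeas := (aemeasurable_cordesDefect hA hb hw).aestronglyMeasurable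
  refine (memLp_two_iff_integrable_sq hmeas).2 <|
    ((integrableOn_frobSq_jac_add_euclSq hw).const_mul (1 - δ)).mono' (hmeas.pow 2) ?_
  filter_upwards [htr, hcordes] with x htrx hcordesx
  rw [Real.norm_of_nonneg (sq_nonneg _)]
  exact sq_cordesDefect_le htrx hcordesx

theorem integral_sq_cordesDefect_le (hδ : δ ≤ 1)
    (htr : ∀ᵐ x ∂volume.restrict (unitCell n), (A x).trace ≠ 0)
    (hcordes : ∀ᵐ x ∂volume.restrict (unitCell n),
      (frobSq (A x) + euclSq (b x)) / (A x).trace ^ 2 ≤ 1 / ((n : ℝ) - 1 + δ))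
    (hw : ContDiff ℝ 1 w) (hper : IsPeriodic w) (hmean : ∫ x in unitCell n, w x = 0) :
    ∫ x in unitCell n, cordesDefect A b w x ^ 2
      ≤ (1 - δ) * (1 + 1 / (4 * π ^ 2)) * ∫ x in unitCell n, frobSq (jac w x) :=
  calc ∫ x in unitCell n, cordesDefect A b w x ^ 2
      ≤ ∫ x in unitCell n, (1 - δ) * (frobSq (jac w x) + euclSq (w x)) :=
        integral_mono_of_nonneg (Filter.Eventually.of_forall fun _ => sq_nonneg _)
          ((integrableOn_frobSq_jac_add_euclSq hw).const_mul (1 - δ)) <| by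
            filter_upwards [htr, hcordes] with x htrx hcordesx using
              sq_cordesDefect_le htrx hcordesx
    _ ≤ (1 - δ) * ((1 + 1 / (4 * π ^ 2)) * ∫ x in unitCell n, frobSq (jac w x)) := by
        rw [integral_const_mul]
        exact mul_le_mul_of_nonneg_left (integral_frobSq_jac_add_euclSq_le hw hper hmean)
          (sub_nonneg.2 hδ)
    _ = _ := (mul_assoc _ _ _).symm

theorem B2_self_eq (hw : ContDiff ℝ 1 w) (hper : IsPeriodic w)
    (hdefect : IntegrableOn (fun x => divg w x * cordesDefect A b w x) (unitCell n)) :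
    B2 A b w w = (∫ x in unitCell n, frobSq (jac w x))
      + ∫ x in unitCell n, divg w x * cordesDefect A b w x := by
  have hsplit : ∀ x, divg w x * (frobInner (gam A b x • A x) (jac w x)
      + dotc (gam A b x • b x) (w x)) = divg w x ^ 2 + divg w x * cordesDefect A b w x :=
    fun x => by
      rw [cordesDefect, frobInner_sub_left, frobInner_one_left, trace_jac]
      ring
  have hdivg_sq : IntegrableOn (fun x => divg w x ^ 2) (unitCell n) :=
    integrableOn_unitCell_of_continuous ((continuous_divg hw).pow 2)
  simp only [B2, hsplit]
  rw [integral_add hdivg_sq hdefect, ← integral_divg_sq_add_half_integral_rot hw hper]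
  ring

theorem stmt_8_general
    (hA : ∀ i j, AEMeasurable (fun x => A x i j) (volume.restrict (unitCell n)))
    (hb : ∀ i, AEMeasurable (fun x => b x i) (volume.restrict (unitCell n))) (hδ : δ ≤ 1)
    (htr : ∀ᵐ x ∂volume.restrict (unitCell n), (A x).trace ≠ 0)
    (hcordes : ∀ᵐ x ∂volume.restrict (unitCell n),
      (frobSq (A x) + euclSq (b x)) / (A x).trace ^ 2 ≤ 1 / ((n : ℝ) - 1 + δ))
    (hw : ContDiff ℝ 1 w) (hper : IsPeriodic w) (hmean : ∫ x in unitCell n, w x = 0) :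
    (1 - √((1 - δ) * (1 + 1 / (4 * π ^ 2)))) * ∫ x in unitCell n, frobSq (jac w x)
      ≤ B2 A b w w := by
  set c := (1 - δ) * (1 + 1 / (4 * π ^ 2))
  set J := ∫ x in unitCell n, frobSq (jac w x) with hJ
  have hJ_nonneg : 0 ≤ J := integral_nonneg fun _ => frobSq_nonneg _
  have hdivg := memLp_unitCell_of_continuous (continuous_divg hw) 2
  have hdefect := memLp_cordesDefect hA hb htr hcordes hw
  have hcross : |∫ x in unitCell n, divg w x * cordesDefect A b w x| ≤ √c * J := by
    rw [← Real.sqrt_sq hJ_nonneg, ← Real.sqrt_mul' c (sq_nonneg J)]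
    refine Real.abs_le_sqrt ((sq_integral_mul_le hdivg hdefect).trans ?_)
    calc _ ≤ J * (c * J) := mul_le_mul (integral_divg_sq_le hw hper)
          (integral_sq_cordesDefect_le hδ htr hcordes hw hper hmean)
          (integral_nonneg fun _ => sq_nonneg _) hJ_nonneg
      _ = c * J ^ 2 := by ring
  rw [B2_self_eq hw hper (hdivg.integrable_mul hdefect), ← hJ]
  linarith [neg_le_of_abs_le hcross]

theorem SettingB.ae_trace_ne_zero {lam Lam : ℝ} (hn : 1 ≤ n) (hAB : SettingB A b lam Lam δ) :
    ∀ᵐ x, (A x).trace ≠ 0 :=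
  hAB.ellip.mono fun _ hx => (trace_pos_of_elliptic hn hAB.lam_pos fun ξ => (hx ξ).1).ne'

theorem one_sub_sqrt_one_sub_kappa_le (hn : 1 ≤ n) (hδ : δ ≤ 1) :
    1 - √(1 - kappa n δ) ≤ 1 - √((1 - δ) * (1 + 1 / (4 * π ^ 2))) := by
  refine sub_le_sub_left (Real.sqrt_le_sqrt ?_) 1
  have hn' : (1 : ℝ) ≤ n := by exact_mod_cast hn
  calc (1 - δ) * (1 + 1 / (4 * π ^ 2)) ≤ (1 - δ) * (1 + n / π ^ 2) := by
        have : 0 ≤ 1 - δ := sub_nonneg.2 hδ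
        have : π ^ 2 ≤ 4 * π ^ 2 := by linarith [sq_nonneg π]
        gcongr
    _ = 1 - kappa n δ := by
        rw [kappa]
        field_simp
        ring

end Coercivity

/-- In Setting B, the bilinear form `B₂` is coercive: for every `C¹`
periodic vector field `w` with zero mean over `Y`,
`B₂(w,w) ≥ (1 − √(1−κ)) ∫_Y |Dw|²`. -/
theorem stmt_8 {n : ℕ} (hn : 1 ≤ n)
    (A : (Fin n → ℝ) → Matrix (Fin n) (Fin n) ℝ) (b : (Fin n → ℝ) → Fin n → ℝ)
    (lam Lam δ : ℝ) (hAB : SettingB A b lam Lam δ) :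
    ∀ w : (Fin n → ℝ) → Fin n → ℝ, ContDiff ℝ 1 w → IsPeriodic w →
      (∫ x in unitCell n, w x) = 0 →
      B2 A b w w
        ≥ (1 - Real.sqrt (1 - kappa n δ)) * ∫ x in unitCell n, frobSq (jac w x) := by
  intro w hw hper hmean
  have hcoercive := stmt_8_general (fun i j => (hAB.measA i j).aemeasurable)
    (fun i => (hAB.measb i).aemeasurable) hAB.delta_mem.2
    (ae_restrict_of_ae (hAB.ae_trace_ne_zero hn)) (ae_restrict_of_ae hAB.cordes) hw hper hmean
  exact (mul_le_mul_of_nonneg_right (one_sub_sqrt_one_sub_kappa_le hn hAB.delta_mem.2)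
    (integral_nonneg fun _ => frobSq_nonneg _)).trans hcoercive
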